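/- Let γ > 0, ε ≥ 0, f ∈ [0,1], and let ρ₀ ∈ M₄(ℂ) with tr(ρ₀) = 1. Set γ' = γ + ε, γ'' = γ + ε/2, ρ₁ = (1/2)((tr_B ρ₀) ⊗ 𝟙₂ + 𝟙₂ ⊗ (tr_A ρ₀)), ρ₂ = ρ_W(f), ρ₃ = 𝟙₄, and define g₀(t) = e^{−γ't}, g₁(t) = 2(e^{−γ''t} − e^{−γ't}), g₂(t) = (γ/γ')(1 − e^{−γ't}), g₃(t) = (2γ/γ')(e^{−γ't} − e^{−γ''t}) + (ε/γ')(e^{−γ't} − 2e^{−γ''t} + 1). Then ρ(t) = ρ₀g₀(t) + ρ₁g₁(t) + ρ₂g₂(t) + ρ₃g₃(t) satisfies ρ(0) = ρ₀, tr(ρ(t)) = 1 for all t, and for every t ≥ 0 the matrix-valued derivative ρ'(t) = γ(tr(ρ(t))·ρ_W(f) − ρ(t)) + (ε/2)·N(ρ(t)), where N(ρ) = (tr_B ρ) ⊗ 𝟙₂ + 𝟙₂ ⊗ (tr_A ρ) − 2ρ. That is, ρ(t) is the general solution of the noisy entangling master equation ρ̇ = γE_f(ρ) + (ε/2)N(ρ).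 -/

import Mathlib

/-!
The four matrices `ρ₀, ρ₁, ρ₂ = ρ_W(f), ρ₃ = 𝟙₄` span a subspace invariant under the noise map `N`:
`N ρ₀ = 2ρ₁ - 2ρ₀`, `N ρ₁ = ρ₃ - ρ₁`, `N ρ₂ = 2ρ₃ - 2ρ₂`, `N ρ₃ = 0`. The first is the definition
of `ρ₁`, the second holds because `tr ρ₀ = 1`,
and the third holds because both marginals of a Werner state are maximally mixed.
All four matrices have trace one and `g₀ + g₁ + g₂ + g₃ = 1`, so `tr ρ(t) = 1`, and the master
equation reduces to the scalar linear system
`g₀' = -γ' g₀`, `g₁' = ε g₀ - γ'' g₁`, `g₂' = γ - γ' g₂`, `g₃' = (ε/2) g₁ + ε g₂ - γ g₃`,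
which is checked directly.
-/

open Matrix Kronecker

/-- Standard basis vector `|ab⟩` of `ℂ² ⊗ ℂ²`. -/
noncomputable def ket2 (a b : Fin 2) : Fin 2 × Fin 2 → ℂ := Pi.single (a, b) 1

/-- The maximally entangled Bell state `ψ₀ = (|00⟩+|11⟩)/√2`. -/
noncomputable def bell0 : Fin 2 × Fin 2 → ℂ :=
  (Real.sqrt 2 : ℂ)⁻¹ • (ket2 0 0 + ket2 1 1)

/-- `Ω = |ψ₀⟩⟨ψ₀|`. -/
noncomputable def Omega : Matrix (Fin 2 × Fin 2) (Fin 2 × Fin 2) ℂ :=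
  Matrix.vecMulVec bell0 (star bell0)

/-- The Werner state of fidelity `f`: `ρ_W(f) = f·Ω + (1−f)(I₄−Ω)/3`. -/
noncomputable def wernerState (f : ℝ) : Matrix (Fin 2 × Fin 2) (Fin 2 × Fin 2) ℂ :=
  (f : ℂ) • Omega + ((1 - f : ℝ) / 3 : ℂ) • ((1 : Matrix (Fin 2 × Fin 2) (Fin 2 × Fin 2) ℂ) - Omega)

/-- Partial trace over the second tensor factor. -/
noncomputable def trB (ρ : Matrix (Fin 2 × Fin 2) (Fin 2 × Fin 2) ℂ) :
    Matrix (Fin 2) (Fin 2) ℂ :=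
  Matrix.of fun a b => ∑ k : Fin 2, ρ (a, k) (b, k)

/-- Partial trace over the first tensor factor. -/
noncomputable def trA (ρ : Matrix (Fin 2 × Fin 2) (Fin 2 × Fin 2) ℂ) :
    Matrix (Fin 2) (Fin 2) ℂ :=
  Matrix.of fun a b => ∑ k : Fin 2, ρ (k, a) (k, b)

/-- The normalized identity `𝟙₂ = I₂/2`. -/
noncomputable def one2 : Matrix (Fin 2) (Fin 2) ℂ := (1 / 2 : ℂ) • 1

/-- The normalized identity `𝟙₄ = I₄/4`. -/
noncomputable def one4 : Matrix (Fin 2 × Fin 2) (Fin 2 × Fin 2) ℂ := (1 / 4 : ℂ) • 1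

/-- The local depolarizing noise term
`N(ρ) = (tr_B ρ) ⊗ 𝟙₂ + 𝟙₂ ⊗ (tr_A ρ) − 2ρ`. -/
noncomputable def noiseN (ρ : Matrix (Fin 2 × Fin 2) (Fin 2 × Fin 2) ℂ) :
    Matrix (Fin 2 × Fin 2) (Fin 2 × Fin 2) ℂ :=
  trB ρ ⊗ₖ one2 + one2 ⊗ₖ trA ρ - (2 : ℂ) • ρ

attribute [local instance] Matrix.normedAddCommGroup Matrix.normedSpace

lemma noiseN_add (A B : Matrix (Fin 2 × Fin 2) (Fin 2 × Fin 2) ℂ) :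
    noiseN (A + B) = noiseN A + noiseN B := by
  ext ⟨a, b⟩ ⟨c, d⟩
  simp [noiseN, trA, trB, Matrix.kroneckerMap_apply]
  ring

lemma noiseN_smul (r : ℝ) (A : Matrix (Fin 2 × Fin 2) (Fin 2 × Fin 2) ℂ) :
    noiseN (r • A) = r • noiseN A := by
  ext ⟨a, b⟩ ⟨c, d⟩
  simp [noiseN, trA, trB, Matrix.kroneckerMap_apply]
  ring

lemma trace_one2 : one2.trace = 1 := by
  simp [one2, Matrix.trace_smul]

lemma trB_kron (A B : Matrix (Fin 2) (Fin 2) ℂ) : trB (A ⊗ₖ B) = B.trace • A := by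
  ext a b
  simp [trB, Matrix.kroneckerMap_apply, Matrix.trace]
  ring

lemma trA_kron (A B : Matrix (Fin 2) (Fin 2) ℂ) : trA (A ⊗ₖ B) = A.trace • B := by
  ext a b
  simp [trA, Matrix.kroneckerMap_apply, Matrix.trace]
  ring

lemma trace_trB (A : Matrix (Fin 2 × Fin 2) (Fin 2 × Fin 2) ℂ) : (trB A).trace = A.trace := by
  simp [trB, Matrix.trace, Fintype.sum_prod_type]

lemma trace_trA (A : Matrix (Fin 2 × Fin 2) (Fin 2 × Fin 2) ℂ) : (trA A).trace = A.trace := by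
  simp [trA, Matrix.trace, Fintype.sum_prod_type]
  ring

lemma one2_kron_one2 : one2 ⊗ₖ one2 = one4 := by
  simp only [one2, one4, Matrix.smul_kronecker, Matrix.kronecker_smul, smul_smul,
    Matrix.one_kronecker_one]
  norm_num

lemma noiseN_kron_one2 (A : Matrix (Fin 2) (Fin 2) ℂ) (hA : A.trace = 1) :
    noiseN (A ⊗ₖ one2) = one4 - A ⊗ₖ one2 := by
  rw [noiseN, trB_kron, trA_kron, trace_one2, hA, one_smul, one_smul, one2_kron_one2]
  module

lemma noiseN_one2_kron (A : Matrix (Fin 2) (Fin 2) ℂ) (hA : A.trace = 1) :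
    noiseN (one2 ⊗ₖ A) = one4 - one2 ⊗ₖ A := by
  rw [noiseN, trB_kron, trA_kron, trace_one2, hA, one_smul, one_smul, one2_kron_one2]
  module

lemma trace_one4 : one4.trace = 1 := by
  simp [one4, Matrix.trace_smul]

lemma noiseN_one4 : noiseN one4 = 0 := by
  rw [← one2_kron_one2, noiseN_kron_one2 _ trace_one2, one2_kron_one2, sub_self]

lemma Omega_apply (a b c d : Fin 2) :
    Omega (a, b) (c, d) = if a = b ∧ c = d then 1 / 2 else 0 := by
  have h : ((Real.sqrt 2 : ℝ) : ℂ)⁻¹ * ((Real.sqrt 2 : ℝ) : ℂ)⁻¹ = 1 / 2 := by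
    rw [← mul_inv, ← Complex.ofReal_mul, Real.mul_self_sqrt (by norm_num)]
    norm_num
  fin_cases a <;> fin_cases b <;> fin_cases c <;> fin_cases d <;>
    simp [Omega, bell0, ket2, Matrix.vecMulVec_apply, Pi.single_apply] <;> simpa using h

lemma trB_wernerState (f : ℝ) : trB (wernerState f) = one2 := by
  ext a b
  fin_cases a <;> fin_cases b <;>
    simp [trB, wernerState, Omega_apply, one2, Matrix.one_apply] <;> ring

lemma trA_wernerState (f : ℝ) : trA (wernerState f) = one2 := by
  ext a b
  fin_cases a <;> fin_cases b <;>
    simp [trA, wernerState, Omega_apply, one2, Matrix.one_apply] <;> ring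

lemma trace_wernerState (f : ℝ) : (wernerState f).trace = 1 := by
  rw [← trace_trB, trB_wernerState, trace_one2]

lemma noiseN_wernerState (f : ℝ) :
    noiseN (wernerState f) = (2 : ℝ) • one4 - (2 : ℝ) • wernerState f := by
  rw [noiseN, trB_wernerState, trA_wernerState, one2_kron_one2]
  module

lemma hasDerivAt_exp_neg_mul (c t : ℝ) :
    HasDerivAt (fun s : ℝ => Real.exp (-c * s)) (-c * Real.exp (-c * t)) t := by
  have h := ((hasDerivAt_id t).const_mul (-c)).exp
  simpa [mul_comm] using h

theorem general_solution_of_noisy_entangling_master_equation (γ ε f : ℝ)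
    (hγ : 0 < γ) (hε : 0 ≤ ε) (hf : f ∈ Set.Icc (0 : ℝ) 1)
    (ρ0 : Matrix (Fin 2 × Fin 2) (Fin 2 × Fin 2) ℂ) (hρ0 : ρ0.trace = 1) :
    let γ' : ℝ := γ + ε
    let γ'' : ℝ := γ + ε / 2
    let ρ1 : Matrix (Fin 2 × Fin 2) (Fin 2 × Fin 2) ℂ :=
      (1 / 2 : ℝ) • (trB ρ0 ⊗ₖ one2 + one2 ⊗ₖ trA ρ0)
    let ρ2 : Matrix (Fin 2 × Fin 2) (Fin 2 × Fin 2) ℂ := wernerState f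
    let ρ3 : Matrix (Fin 2 × Fin 2) (Fin 2 × Fin 2) ℂ := one4
    let g0 : ℝ → ℝ := fun t => Real.exp (-γ' * t)
    let g1 : ℝ → ℝ := fun t => 2 * (Real.exp (-γ'' * t) - Real.exp (-γ' * t))
    let g2 : ℝ → ℝ := fun t => (γ / γ') * (1 - Real.exp (-γ' * t))
    let g3 : ℝ → ℝ := fun t =>
      (2 * γ / γ') * (Real.exp (-γ' * t) - Real.exp (-γ'' * t)) +
        (ε / γ') * (Real.exp (-γ' * t) - 2 * Real.exp (-γ'' * t) + 1)
    let ρ : ℝ → Matrix (Fin 2 × Fin 2) (Fin 2 × Fin 2) ℂ := fun t =>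
      g0 t • ρ0 + g1 t • ρ1 + g2 t • ρ2 + g3 t • ρ3
    ρ 0 = ρ0 ∧ (∀ t : ℝ, (ρ t).trace = 1) ∧
      ∀ t : ℝ, 0 ≤ t →
        HasDerivAt ρ
          (γ • ((ρ t).trace • wernerState f - ρ t) + (ε / 2) • noiseN (ρ t)) t := by
  intro γ' γ'' ρ1 ρ2 ρ3 g0 g1 g2 g3 ρ
  have hγ' : γ + ε ≠ 0 := by positivity
  have tB : (trB ρ0).trace = 1 := by rw [trace_trB, hρ0]
  have tA : (trA ρ0).trace = 1 := by rw [trace_trA, hρ0]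
  have tr1 : ρ1.trace = 1 := by
    simp only [ρ1, Matrix.trace_smul, Matrix.trace_add, Matrix.trace_kronecker, tA, tB, trace_one2]
    norm_num
  have hN0 : noiseN ρ0 = (2 : ℝ) • ρ1 - (2 : ℝ) • ρ0 := by
    simp only [ρ1, noiseN]
    module
  have hN1 : noiseN ρ1 = ρ3 - ρ1 := by
    simp only [ρ1, ρ3, noiseN_smul, noiseN_add, noiseN_kron_one2 _ tB, noiseN_one2_kron _ tA]
    module
  have hsum (t : ℝ) : g0 t + g1 t + g2 t + g3 t = 1 := by
    simp only [g0, g1, g2, g3, γ']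
    field_simp
    ring
  have htr (t : ℝ) : (ρ t).trace = 1 := by
    simp only [ρ, ρ2, ρ3, Matrix.trace_add, Matrix.trace_smul, hρ0, tr1, trace_wernerState,
      trace_one4, ← add_smul, hsum, one_smul]
  refine ⟨?_, htr, fun t _ => ?_⟩
  · simp only [ρ, g0, g1, g2, g3, mul_zero, Real.exp_zero]
    norm_num
  have hexp1 := hasDerivAt_exp_neg_mul γ' t
  have hexp2 := hasDerivAt_exp_neg_mul γ'' t
  have d0 : HasDerivAt g0 (-γ' * g0 t) t := hexp1
  have d1 : HasDerivAt g1 (ε * g0 t - γ'' * g1 t) t := by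
    refine ((hexp2.sub hexp1).const_mul 2).congr_deriv ?_
    simp only [g0, g1, γ', γ'']
    ring
  have d2 : HasDerivAt g2 (γ - γ' * g2 t) t := by
    refine ((hexp1.const_sub 1).const_mul (γ / γ')).congr_deriv ?_
    simp only [g2, γ']
    field_simp
    ring
  have d3 : HasDerivAt g3 (ε / 2 * g1 t + ε * g2 t - γ * g3 t) t := by
    refine (((hexp1.sub hexp2).const_mul (2 * γ / γ')).add
      (((hexp1.sub (hexp2.const_mul 2)).add_const 1).const_mul (ε / γ'))).congr_deriv ?_
    simp only [g1, g2, g3, γ', γ'']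
    field_simp
    ring
  refine ((((d0.smul_const ρ0).add (d1.smul_const ρ1)).add (d2.smul_const ρ2)).add
    (d3.smul_const ρ3)).congr_deriv ?_
  rw [htr, one_smul]
  simp only [ρ, noiseN_add, noiseN_smul, hN0, hN1]
  simp only [ρ2, ρ3, noiseN_wernerState, noiseN_one4, γ', γ'']
  module
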